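/- Let D be a division ring with center F, and suppose every element of T(D) is radical over F (i.e., for each t ∈ T(D) there exists n ≥ 1 with tⁿ ∈ F). Then D = F. -/

import Mathlib

/-!
The space `T = T(D)` contains `F`. Let `q` be the characteristic exponent of `D`. Suppose some
`t ∈ T` has no power `t ^ q ^ r` in `F`; then its minimal polynomial has two distinct roots `c` and
`c'`, and as every `t + a` with `a ∈ F` is radical, every `(c + a) / (c' + a)` is a root of unity.
The values at `a = 0, 1` show that `c` and `c'` are algebraic over the prime field, and then so is
every `a ∈ F`. The prime field is not `ℚ`, because the number field `ℚ(c, c')` has only finitely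
many roots of unity. Hence either every `t ∈ T` has some `t ^ q ^ r` in `F`, or every nonzero
element of `T` has finite order.

Given a noncentral `a ∈ T`, in both cases there is `g` with `g a = k (g - 1)` and `k` conjugate to
`a`; then `1 - g⁻¹` is a commutator, so `g⁻¹ ∈ T`. In the first case `k = a`, and the conjugation
`g ↦ g - 1`, raised to the power `q ^ r` that makes `g ^ q ^ r` central, gives `a = 0`. In the
second case `k` lies in the finite field `K = 𝔽_p[a]` and does not commute with `g`; but
`g K ⊆ K g + K` and `g` has finite order, so `K` and `g` generate a finite ring, which is
commutative by Wedderburn's theorem. Therefore `T ⊆ F`, and comparing the commutators of `x` and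
`x + 1` with `y` yields `D = F`.
-/

open Polynomial

section Fields

variable {E : Type*} [Field E] {c c' : E}

lemma isAlgebraic_of_isOfFinOrder (k : Type*) {A : Type*} [CommRing k] [Nontrivial k]
    [Ring A] [Algebra k A] {x : A} (hx : IsOfFinOrder x) : IsAlgebraic k x := by
  obtain ⟨n, hn, hxn⟩ := isOfFinOrder_iff_pow_eq_one.1 hx
  exact .of_pow hn (hxn ▸ isAlgebraic_one)

lemma ne_zero_of_isOfFinOrder_div {x y : E} (h : IsOfFinOrder (x / y)) : y ≠ 0 :=
  (div_ne_zero_iff.1 h.isUnit.ne_zero).2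

lemma isOfFinOrder_div_of_pow_eq {x y : E} {n : ℕ} (hn : 0 < n) (hxy : x ≠ y)
    (h : x ^ n = y ^ n) : IsOfFinOrder (x / y) := by
  have hy : y ≠ 0 := by
    rintro rfl
    exact hxy (by simpa [hn.ne'] using h)
  exact isOfFinOrder_iff_pow_eq_one.2 ⟨n, hn, by rw [div_pow, h, div_self (pow_ne_zero n hy)]⟩

lemma isOfFinOrder_of_isAlgebraic_zmod {p : ℕ} [Fact p.Prime] [Algebra (ZMod p) E] {x : E}
    (hx : IsAlgebraic (ZMod p) x) (hx0 : x ≠ 0) : IsOfFinOrder x := by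
  let L := IntermediateField.adjoin (ZMod p) {x}
  have : FiniteDimensional (ZMod p) L :=
    IntermediateField.adjoin.finiteDimensional hx.isIntegral
  have : Finite L := Module.finite_of_finite (ZMod p)
  let gen : L := IntermediateField.AdjoinSimple.gen (ZMod p) x
  have hgen : gen ≠ 0 := fun h => hx0 (congrArg Subtype.val h)
  exact L.val.toMonoidHom.isOfFinOrder (isOfFinOrder_iff_isUnit.2 (isUnit_iff_ne_zero.2 hgen))

lemma finite_setOf_isOfFinOrder (K : Type*) [Field K] [NumberField K] :
    {x : K | IsOfFinOrder x}.Finite := by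
  refine (NumberField.Embeddings.finite_of_norm_le K ℂ 1).subset fun x hx => ?_
  obtain ⟨n, hn, hxn⟩ := isOfFinOrder_iff_pow_eq_one.1 hx
  refine ⟨.of_pow hn (hxn ▸ isIntegral_one), fun φ => ?_⟩
  exact (Complex.norm_eq_one_of_pow_eq_one (by rw [← map_pow, hxn, map_one]) hn.ne').le

lemma eq_of_add_div_add_eq (hcc : c ≠ c') {a b : E} (ha : c' + a ≠ 0) (hb : c' + b ≠ 0)
    (h : (c + a) / (c' + a) = (c + b) / (c' + b)) : a = b := by
  rw [div_eq_div_iff ha hb] at h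
  have : (c - c') * (b - a) = 0 := by linear_combination h
  rcases mul_eq_zero.1 this with h | h
  · exact absurd (sub_eq_zero.1 h) hcc
  · exact (sub_eq_zero.1 h).symm

variable (k : Type*) [Field k] [Algebra k E]

-- The two ratios determine `c` and `c'` as the solution of a nonsingular linear system.
lemma isAlgebraic_of_isAlgebraic_div (hcc : c ≠ c') (hc' : c' ≠ 0) (hc'1 : c' + 1 ≠ 0)
    (h0 : IsAlgebraic k (c / c')) (h1 : IsAlgebraic k ((c + 1) / (c' + 1))) :
    IsAlgebraic k c ∧ IsAlgebraic k c' := by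
  set z := c / c'
  set w := (c + 1) / (c' + 1)
  have hz : c = z * c' := (div_mul_cancel₀ c hc').symm
  have hw : c + 1 = w * (c' + 1) := (div_mul_cancel₀ (c + 1) hc'1).symm
  have hzw : z - w ≠ 0 := fun h => zero_ne_one <|
    eq_of_add_div_add_eq hcc (by simpa using hc') hc'1 (by simpa using sub_eq_zero.1 h)
  have hc'_eq : c' = (w - 1) / (z - w) := by
    rw [eq_div_iff hzw]
    linear_combination hw - hz
  have alg_c' : IsAlgebraic k c' := by
    rw [hc'_eq, div_eq_mul_inv]
    exact (h1.sub isAlgebraic_one).mul (h0.sub h1).inv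
  exact ⟨hz ▸ h0.mul alg_c', alg_c'⟩

lemma isAlgebraic_of_isAlgebraic_add_div_add (hcc : c ≠ c') (hc : IsAlgebraic k c)
    (hc' : IsAlgebraic k c') {a : E} (ha : c' + a ≠ 0)
    (h : IsAlgebraic k ((c + a) / (c' + a))) : IsAlgebraic k a := by
  set z := (c + a) / (c' + a)
  have hz : c + a = z * (c' + a) := (div_mul_cancel₀ (c + a) ha).symm
  have hz1 : 1 - z ≠ 0 := fun h => hcc <| by linear_combination hz - (c' + a) * h
  have ha_eq : a = (z * c' - c) / (1 - z) := by
    rw [eq_div_iff hz1]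
    linear_combination hz
  rw [ha_eq, div_eq_mul_inv]
  exact ((h.mul hc').sub hc).mul (isAlgebraic_one.sub h).inv

-- In characteristic zero the ratios would be infinitely many roots of unity in the number field
-- `ℚ(c, c')`.
lemma not_charZero_of_forall_isOfFinOrder_add_div_add (hcc : c ≠ c')
    (h : ∀ a : ℕ, IsOfFinOrder ((c + a) / (c' + a))) : ¬ CharZero E := by
  intro _
  have hne (a : ℕ) : c' + a ≠ 0 := ne_zero_of_isOfFinOrder_div (h a)
  obtain ⟨alg_c, alg_c'⟩ := isAlgebraic_of_isAlgebraic_div ℚ hcc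
    (by simpa using hne 0) (by simpa using hne 1)
    (by simpa using isAlgebraic_of_isOfFinOrder ℚ (h 0))
    (by simpa using isAlgebraic_of_isOfFinOrder ℚ (h 1))
  let M := IntermediateField.adjoin ℚ {c, c'}
  have : FiniteDimensional ℚ M := IntermediateField.finiteDimensional_adjoin <| by
    rintro x (rfl | rfl)
    exacts [alg_c.isIntegral, alg_c'.isIntegral]
  have : NumberField M := {}
  have hcM : c ∈ M := IntermediateField.subset_adjoin _ _ (by simp)
  have hc'M : c' ∈ M := IntermediateField.subset_adjoin _ _ (by simp)
  let ratio (a : ℕ) : M :=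
    ⟨(c + a) / (c' + a), div_mem (add_mem hcM (natCast_mem M a)) (add_mem hc'M (natCast_mem M a))⟩
  have ratio_injective : ratio.Injective := fun a b hab => Nat.cast_injective (R := E) <|
    eq_of_add_div_add_eq hcc (hne a) (hne b) (congrArg Subtype.val hab)
  exact Set.infinite_of_injective_forall_mem ratio_injective
    (fun a => Submonoid.isOfFinOrder_coe (H := M.toSubfield.toSubmonoid).1 (h a))
    (finite_setOf_isOfFinOrder M)

lemma exists_charP_and_forall_isOfFinOrder_of_add_div_add {F : Type*} [Field F] [Algebra F E]
    (hcc : c ≠ c')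
    (h : ∀ a : F, IsOfFinOrder ((c + algebraMap F E a) / (c' + algebraMap F E a))) :
    ∃ p : ℕ, p.Prime ∧ CharP F p ∧ ∀ a : F, a ≠ 0 → IsOfFinOrder a := by
  have hne (a : F) : c' + algebraMap F E a ≠ 0 := ne_zero_of_isOfFinOrder_div (h a)
  rcases CharP.exists' F with _ | ⟨p, hp, hchar⟩
  · have : CharZero E := charZero_of_injective_algebraMap (algebraMap F E).injective
    exact absurd this <|
      not_charZero_of_forall_isOfFinOrder_add_div_add hcc fun a => by simpa using h a
  refine ⟨p, hp.out, hchar, fun a ha => ?_⟩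
  algebraize [ZMod.castHom dvd_rfl F, (algebraMap F E).comp (ZMod.castHom dvd_rfl F)]
  have hζ (a : F) : IsAlgebraic (ZMod p) ((c + algebraMap F E a) / (c' + algebraMap F E a)) :=
    isAlgebraic_of_isOfFinOrder (ZMod p) (h a)
  obtain ⟨alg_c, alg_c'⟩ := isAlgebraic_of_isAlgebraic_div (ZMod p) hcc
    (by simpa using hne 0) (by simpa using hne 1) (by simpa using hζ 0) (by simpa using hζ 1)
  have alg_a := isAlgebraic_of_isAlgebraic_add_div_add (ZMod p) hcc alg_c alg_c' (hne a) (hζ a)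
  exact isOfFinOrder_of_isAlgebraic_zmod
    ((isAlgebraic_algebraMap_iff (algebraMap F E).injective).1 alg_a) ha

end Fields

section Conjugates

variable {F A : Type*} [Field F] [Ring A] [Algebra F A] {t : A}

lemma add_pow_eq_add_pow_of_aeval_minpoly_eq_zero {E : Type*} [Field E] [Algebra F E] {c c' : E}
    (hc : aeval c (minpoly F t) = 0) (hc' : aeval c' (minpoly F t) = 0) {a : F} {n : ℕ}
    (h : (t + algebraMap F A a) ^ n ∈ (algebraMap F A).range) :
    (c + algebraMap F E a) ^ n = (c' + algebraMap F E a) ^ n := by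
  obtain ⟨b, hb⟩ := h
  have hdvd : minpoly F t ∣ (X + C a) ^ n - C b := minpoly.dvd F t (by simp [hb])
  have eval_eq {x : E} (hx : aeval x (minpoly F t) = 0) :
      (x + algebraMap F E a) ^ n = algebraMap F E b := by
    simpa [sub_eq_zero] using aeval_eq_zero_of_dvd_aeval_eq_zero hdvd hx
  rw [eval_eq hc, eval_eq hc']

variable [IsDomain A]

lemma exists_ne_aeval_minpoly_eq_zero (q : ℕ) [ExpChar F q] (ht : IsIntegral F t)
    (hsep : ∀ r : ℕ, t ^ q ^ r ∉ (algebraMap F A).range) :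
    ∃ c c' : AlgebraicClosure F,
      c ≠ c' ∧ aeval c (minpoly F t) = 0 ∧ aeval c' (minpoly F t) = 0 := by
  classical
  have hdeg_ne_one : (minpoly F t).natSepDegree ≠ 1 := fun h =>
    let ⟨r, hr⟩ := (minpoly.natSepDegree_eq_one_iff_pow_mem q).1 h
    hsep r hr
  have hdeg_ne_zero : (minpoly F t).natSepDegree ≠ 0 :=
    natSepDegree_ne_zero _ (minpoly.natDegree_pos ht).ne'
  have hdeg : 1 < (minpoly F t).natSepDegree := by lia
  rw [natSepDegree_eq_of_isAlgClosed (AlgebraicClosure F)] at hdeg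
  obtain ⟨c, hc, c', hc', hcc⟩ := Finset.one_lt_card.1 hdeg
  rw [Multiset.mem_toFinset, mem_aroots] at hc hc'
  exact ⟨c, c', hcc, hc.2, hc'.2⟩

theorem exists_pow_mem_range_or_forall_isOfFinOrder (q : ℕ) [ExpChar F q]
    (h : ∀ a : F, ∃ n : ℕ, 0 < n ∧ (t + algebraMap F A a) ^ n ∈ (algebraMap F A).range) :
    (∃ r : ℕ, t ^ q ^ r ∈ (algebraMap F A).range) ∨
      ∃ p : ℕ, p.Prime ∧ CharP F p ∧ ∀ a : F, a ≠ 0 → IsOfFinOrder a := by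
  refine or_iff_not_imp_left.2 fun hsep => ?_
  have ht : IsIntegral F t := by
    obtain ⟨n, hn, b, hb⟩ := h 0
    rw [map_zero, add_zero] at hb
    exact .of_pow hn (hb ▸ isIntegral_algebraMap)
  obtain ⟨c, c', hcc, hc, hc'⟩ := exists_ne_aeval_minpoly_eq_zero q ht (not_exists.1 hsep)
  refine exists_charP_and_forall_isOfFinOrder_of_add_div_add hcc fun a => ?_
  obtain ⟨n, hn, hn_mem⟩ := h a
  exact isOfFinOrder_div_of_pow_eq hn (fun h => hcc (add_right_cancel h))
    (add_pow_eq_add_pow_of_aeval_minpoly_eq_zero hc hc' hn_mem)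

end Conjugates

section FiniteSubrings

lemma commute_of_mem_of_finite {R : Type*} [Ring R] [IsDomain R] {S : Subring R} [Finite S]
    {x y : R} (hx : x ∈ S) (hy : y ∈ S) : Commute x y :=
  congrArg Subtype.val ((Finite.isDomain_to_isField S).mul_comm ⟨x, hx⟩ ⟨y, hy⟩)

variable {R : Type*} [Ring R] {K : Subring R} {g : R}

lemma mul_mem_span_of_mem_closure {s : Set R}
    (hg : ∀ a ∈ s, g * a ∈ Submodule.span (Subring.closure s) {g, 1}) {b : R}
    (hb : b ∈ Subring.closure s) : g * b ∈ Submodule.span (Subring.closure s) {g, 1} := by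
  have closure_le {b : R} (hb : b ∈ Subring.closure s) :
      b ∈ Submodule.span (Subring.closure s) {g, 1} :=
    Submodule.mem_span_pair.2 ⟨0, ⟨b, hb⟩, by simp [Subring.smul_def]⟩
  induction hb using Subring.closure_induction with
  | mem a ha => exact hg a ha
  | zero => simp
  | one => rw [mul_one]; exact Submodule.subset_span (by simp)
  | add x y _ _ hx hy => rw [mul_add]; exact add_mem hx hy
  | neg x _ hx => rw [mul_neg]; exact neg_mem hx
  | mul x y _ hy_mem hx hy =>
    obtain ⟨b₁, b₂, hb⟩ := Submodule.mem_span_pair.1 hx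
    have : g * (x * y) = b₁ • (g * y) + (b₂ : R) * y := by
      rw [← mul_assoc, ← hb]
      simp [Subring.smul_def, add_mul, mul_assoc]
    rw [this]
    exact add_mem (Submodule.smul_mem _ _ hy) (closure_le (mul_mem b₂.2 hy_mem))

lemma mul_mem_span_powers (hg : ∀ b ∈ K, g * b ∈ Submodule.span K {g, 1}) {x : R}
    (hx : x ∈ Submodule.span K (Submonoid.powers g : Set R)) :
    g * x ∈ Submodule.span K (Submonoid.powers g : Set R) := by
  induction hx using Submodule.span_induction with
  | mem x hx => exact Submodule.subset_span (mul_mem (Submonoid.mem_powers g) hx)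
  | zero => simp
  | add x y _ _ hx hy => rw [mul_add]; exact add_mem hx hy
  | smul b x hx_mem hx =>
    obtain ⟨b₁, b₂, hb⟩ := Submodule.mem_span_pair.1 (hg b b.2)
    have : g * b • x = b₁ • (g * x) + b₂ • x := by
      rw [Subring.smul_def b, smul_eq_mul, ← mul_assoc, ← hb]
      simp [Subring.smul_def, add_mul, mul_assoc]
    rw [this]
    exact add_mem (Submodule.smul_mem _ _ hx) (Submodule.smul_mem _ _ hx_mem)

lemma mul_mem_span_powers_of_mem (hg : ∀ b ∈ K, g * b ∈ Submodule.span K {g, 1}) {x y : R}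
    (hx : x ∈ Submodule.span K (Submonoid.powers g : Set R))
    (hy : y ∈ Submodule.span K (Submonoid.powers g : Set R)) :
    x * y ∈ Submodule.span K (Submonoid.powers g : Set R) := by
  induction hx using Submodule.span_induction with
  | mem x hx =>
    obtain ⟨n, rfl⟩ := hx
    induction n with
    | zero => simpa using hy
    | succ n ih =>
      simpa only [pow_succ', mul_assoc] using mul_mem_span_powers hg ih
  | zero => simp
  | add x z _ _ hx hz => rw [add_mul]; exact add_mem hx hz
  | smul b x _ hx => rw [smul_mul_assoc]; exact Submodule.smul_mem _ _ hx

theorem exists_finite_subring_of_mul_mem_span [Finite K] (hfin : IsOfFinOrder g)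
    (hg : ∀ b ∈ K, g * b ∈ Submodule.span K {g, 1}) :
    ∃ S : Subring R, Finite S ∧ K ≤ S ∧ g ∈ S := by
  let N := Submodule.span K (Submonoid.powers g : Set R)
  have one_mem : 1 ∈ N := Submodule.subset_span (one_mem (Submonoid.powers g))
  have hpowers : (Submonoid.powers g : Set R).Finite := hfin.finite_powers
  have : Module.Finite K N := .span_of_finite K hpowers
  have : Finite N := Module.finite_of_finite K
  let S : Subring R :=
    { N.toAddSubgroup with
      one_mem' := one_mem
      mul_mem' := mul_mem_span_powers_of_mem hg }
  refine ⟨S, ‹Finite N›, fun b hb => ?_, Submodule.subset_span (Submonoid.mem_powers g)⟩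
  have : b • (1 : R) ∈ N := N.smul_mem (⟨b, hb⟩ : K) one_mem
  rwa [smul_eq_mul, mul_one] at this

lemma finite_closure_singleton_of_isOfFinOrder (p : ℕ) [NeZero p] [CharP R p]
    (hg : IsOfFinOrder g) : Finite (Subring.closure {g}) := by
  let _ : Algebra (ZMod p) R := ZMod.algebra R p
  have : Finite (algebraMap (ZMod p) R).range := Set.finite_range (algebraMap (ZMod p) R)
  obtain ⟨S, _, -, hgS⟩ :
      ∃ S : Subring R, Finite S ∧ (algebraMap (ZMod p) R).range ≤ S ∧ g ∈ S := by
    refine exists_finite_subring_of_mul_mem_span hg ?_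
    rintro _ ⟨b, rfl⟩
    rw [← Algebra.commutes]
    exact Submodule.mem_span_pair.2 ⟨⟨_, b, rfl⟩, 0, by simp [Subring.smul_def]⟩
  exact Finite.Set.subset (S : Set R) (Subring.closure_le.2 (Set.singleton_subset_iff.2 hgS))

end FiniteSubrings

section Endomorphisms

lemma exists_apply_ne_zero_and_apply_apply_eq_zero_of_isNilpotent {R M : Type*} [Semiring R]
    [AddCommMonoid M] [Module R M] {f : Module.End R M} (hf : f ≠ 0) (hnil : IsNilpotent f) :
    ∃ y, f y ≠ 0 ∧ f (f y) = 0 := by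
  by_contra! h
  obtain ⟨n, hn⟩ := hnil
  obtain ⟨x, hx⟩ := DFunLike.ne_iff.1 hf
  have pow_apply_ne_zero (i : ℕ) : f ((f ^ i) x) ≠ 0 := by
    induction i with
    | zero => exact hx
    | succ i ih => rw [pow_succ', Module.End.mul_apply]; exact h _ ih
  exact pow_apply_ne_zero n (by simp [hn])

variable {K V : Type*} [Field K] [AddCommGroup V] [Module K V]

lemma exists_eigenvector_of_aeval_prod_X_sub_C_apply_eq_zero (f : Module.End K V) (s : Finset K)
    {v : V} (hv : v ≠ 0) (h : aeval f (∏ k ∈ s, (X - C k)) v = 0) :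
    ∃ k ∈ s, ∃ w ≠ 0, f w = k • w := by
  classical
  induction s using Finset.induction_on generalizing v with
  | empty => exact absurd (by simpa using h) hv
  | insert k s hk ih =>
    rw [Finset.prod_insert hk, mul_comm, map_mul, Module.End.mul_apply] at h
    by_cases hw : aeval f (X - C k) v = 0
    · exact ⟨k, s.mem_insert_self k, v, hv, by simpa [sub_eq_zero] using hw⟩
    · obtain ⟨l, hl, hl_eigen⟩ := ih hw h
      exact ⟨l, Finset.mem_insert_of_mem hl, hl_eigen⟩

lemma prod_X_sub_C_univ (K : Type*) [Field K] [Fintype K] :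
    ∏ k : K, (X - C k) = X ^ Fintype.card K - X := by
  have hroots := FiniteField.roots_X_pow_card_sub_X K
  have hmonic : (X ^ Fintype.card K - X : K[X]).Monic :=
    monic_X_pow_sub (by rw [degree_X]; exact_mod_cast Fintype.one_lt_card)
  have hcard : (X ^ Fintype.card K - X : K[X]).roots.card =
      (X ^ Fintype.card K - X : K[X]).natDegree := by
    rw [hroots, FiniteField.X_pow_card_sub_X_natDegree_eq K Fintype.one_lt_card]
    rfl
  have hprod := prod_multiset_X_sub_C_of_monic_of_roots_card_eq hmonic hcard
  rwa [hroots] at hprod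

lemma exists_eigenvector_ne_of_pow_card_eq_self [Fintype K] {f : Module.End K V}
    (hf : f ^ Fintype.card K = f) {α : K} {v : V} (hv : f v ≠ α • v) :
    ∃ k ≠ α, ∃ w ≠ 0, f w = k • w := by
  classical
  have hprod : aeval f ((∏ k ∈ Finset.univ.erase α, (X - C k)) * (X - C α)) = 0 := by
    rw [Finset.prod_erase_mul _ _ (Finset.mem_univ α), prod_X_sub_C_univ]
    simp [hf]
  obtain ⟨k, hk, hk_eigen⟩ := exists_eigenvector_of_aeval_prod_X_sub_C_apply_eq_zero f
    (Finset.univ.erase α) (v := f v - α • v) (sub_ne_zero.2 hv)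
    (by simpa using LinearMap.congr_fun hprod v)
  exact ⟨k, (Finset.mem_erase.1 hk).1, hk_eigen⟩

end Endomorphisms

section DivisionRing

variable {D : Type*} [DivisionRing D]

lemma exists_mul_ne_mul_of_notMem_center {a : D} (ha : a ∉ Subring.center D) :
    ∃ x, x * a ≠ a * x := by
  by_contra! h
  exact ha (Subring.mem_center_iff.2 h)

lemma ne_zero_of_notMem_center {a : D} (ha : a ∉ Subring.center D) : a ≠ 0 :=
  fun h => ha (h ▸ zero_mem (Subring.center D))

theorem exists_mul_eq_mul_of_mem_finite_subring {K : Subring D} [Finite K] {a : D} (haK : a ∈ K)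
    (ha : a ∉ Subring.center D) : ∃ k ∈ K, k ≠ a ∧ ∃ y ≠ 0, y * a = k * y := by
  let _ : Field K := (Finite.isDomain_to_isField K).toField
  let _ := Fintype.ofFinite K
  have hcard : (LinearMap.mulRight K a) ^ Fintype.card K = LinearMap.mulRight K a := by
    rw [LinearMap.pow_mulRight]
    congr 1
    exact congrArg Subtype.val (FiniteField.pow_card (⟨a, haK⟩ : K))
  obtain ⟨x, hx⟩ := exists_mul_ne_mul_of_notMem_center ha
  obtain ⟨k, hk, y, hy, hy_eigen⟩ :=
    exists_eigenvector_ne_of_pow_card_eq_self hcard (α := ⟨a, haK⟩) (v := x) hx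
  exact ⟨k, k.2, fun h => hk (Subtype.ext h), y, hy, hy_eigen⟩

-- Dividing `y` by `c = a * y - y * a`, where `c ≠ 0` commutes with `a`, normalises `c` to `1`.
lemma exists_mul_sub_mul_eq_one (q : ℕ) [ExpChar D q] {a : D} (ha : a ∉ Subring.center D) {m : ℕ}
    (hm : a ^ q ^ m ∈ Subring.center D) : ∃ z : D, a * z - z * a = 1 := by
  let F := Subring.center D
  let δ : Module.End F D := LinearMap.mulLeft F a - LinearMap.mulRight F a
  have hδ : δ ≠ 0 := fun h =>
    ha (Subring.mem_center_iff.2 fun x => (sub_eq_zero.1 (LinearMap.congr_fun h x)).symm)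
  have hδ_nilpotent : IsNilpotent δ := by
    refine ⟨q ^ m, ?_⟩
    rw [sub_pow_expChar_pow_of_commute q m (LinearMap.commute_mulLeft_right a a),
      LinearMap.pow_mulLeft, LinearMap.pow_mulRight, sub_eq_zero]
    ext x
    exact (Subring.mem_center_iff.1 hm x).symm
  obtain ⟨y, hy, hδy⟩ := exists_apply_ne_zero_and_apply_apply_eq_zero_of_isNilpotent hδ hδ_nilpotent
  have hcomm : Commute a (δ y)⁻¹ := Commute.inv_right₀ (sub_eq_zero.1 hδy)
  refine ⟨(δ y)⁻¹ * y, ?_⟩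
  calc a * ((δ y)⁻¹ * y) - (δ y)⁻¹ * y * a = (δ y)⁻¹ * (a * y - y * a) := by
        rw [← mul_assoc, hcomm.eq, mul_sub, mul_assoc, mul_assoc]
    _ = 1 := inv_mul_cancel₀ hy

lemma exists_mul_eq_mul_sub_one_of_pow_mem_center (q : ℕ) [ExpChar D q] {a : D}
    (ha : a ∉ Subring.center D) {m : ℕ} (hm : a ^ q ^ m ∈ Subring.center D) :
    ∃ g ≠ 0, g * a = a * (g - 1) := by
  obtain ⟨z, hz⟩ := exists_mul_sub_mul_eq_one q ha hm
  have hg : a * z * a = a * (a * z - 1) := by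
    rw [mul_assoc, ← hz, sub_sub_cancel]
  refine ⟨a * z, fun h => ha ?_, hg⟩
  have ha0 : a = 0 := by simpa [h] using hg
  exact ha0 ▸ zero_mem _

lemma exists_mul_eq_mul_sub_one_of_mul_eq_mul {a k y : D} (ha : a ≠ 0) (hy : y ≠ 0) (hka : k ≠ a)
    (hcomm : Commute k a) (hyk : y * a = k * y) :
    ∃ g ≠ 0, g * a = k * (g - 1) ∧ ¬ Commute g k := by
  have hk : k ≠ 0 := left_ne_zero_of_mul (hyk ▸ mul_ne_zero hy ha)
  have hd : k - a ≠ 0 := sub_ne_zero.2 hka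
  have hy1 : 1 + y ≠ 0 := fun h => by
    rw [eq_neg_of_add_eq_zero_right h] at hyk
    exact hka (by simpa using hyk.symm)
  let g := k * (1 + y) * (k - a)⁻¹
  have hg : g * (k - a) = k * (1 + y) := inv_mul_cancel_right₀ hd _
  have hga : g * a = k * (g - 1) := by
    have hda : Commute (k - a) a := hcomm.sub_left (Commute.refl a)
    apply mul_right_cancel₀ hd
    calc g * a * (k - a) = k * ((1 + y) * a) := by
          rw [mul_assoc, ← hda.eq, ← mul_assoc, hg, mul_assoc]
      _ = k * (k * (1 + y) - (k - a)) := by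
          rw [add_mul, hyk]
          noncomm_ring
      _ = k * (g - 1) * (k - a) := by rw [mul_assoc, sub_mul, hg, one_mul]
  refine ⟨g, mul_ne_zero (mul_ne_zero hk hy1) (inv_ne_zero hd), hga, fun hgk => hy ?_⟩
  have : k * (1 + y) = k * 1 := by
    rw [← hg, mul_sub, hga, hgk.eq]
    noncomm_ring
  simpa using mul_left_cancel₀ hk this

variable (D) in
/-- The space `T(D)`: the span, over the centre of `D`, of the multiplicative commutators. -/
def commutatorSpan : Submodule (Subring.center D) D :=
  Submodule.span (Subring.center D) {z : D | ∃ x y : D, x ≠ 0 ∧ y ≠ 0 ∧ z = x * y * x⁻¹ * y⁻¹}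

lemma commutator_mem_commutatorSpan {x y : D} (hx : x ≠ 0) (hy : y ≠ 0) :
    x * y * x⁻¹ * y⁻¹ ∈ commutatorSpan D :=
  Submodule.subset_span ⟨x, y, hx, hy, rfl⟩

lemma one_mem_commutatorSpan : (1 : D) ∈ commutatorSpan D := by
  simpa using commutator_mem_commutatorSpan (one_ne_zero (α := D)) one_ne_zero

lemma algebraMap_mem_commutatorSpan (a : Subring.center D) :
    algebraMap (Subring.center D) D a ∈ commutatorSpan D := by
  simpa [Algebra.smul_def] using (commutatorSpan D).smul_mem a one_mem_commutatorSpan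

-- `1 - g⁻¹` is the commutator of `k⁻¹` and `g * y⁻¹`.
lemma inv_mem_commutatorSpan {a k y g : D} (ha : a ≠ 0) (hy : y ≠ 0) (hg : g ≠ 0)
    (hyk : y * a = k * y) (hga : g * a = k * (g - 1)) : g⁻¹ ∈ commutatorSpan D := by
  have hk : k ≠ 0 := left_ne_zero_of_mul (hyk ▸ mul_ne_zero hy ha)
  have hconj : y⁻¹ * k * y = a := by
    rw [mul_assoc, ← hyk, inv_mul_cancel_left₀ hy]
  have hcomm : k⁻¹ * (g * y⁻¹) * k⁻¹⁻¹ * (g * y⁻¹)⁻¹ = 1 - g⁻¹ := by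
    calc k⁻¹ * (g * y⁻¹) * k⁻¹⁻¹ * (g * y⁻¹)⁻¹ = k⁻¹ * (g * (y⁻¹ * k * y)) * g⁻¹ := by
          simp only [inv_inv, mul_inv_rev, mul_assoc]
      _ = (g - 1) * g⁻¹ := by rw [hconj, hga, inv_mul_cancel_left₀ hk]
      _ = 1 - g⁻¹ := by rw [sub_mul, one_mul, mul_inv_cancel₀ hg]
  have hmem := commutator_mem_commutatorSpan (inv_ne_zero hk) (mul_ne_zero hg (inv_ne_zero hy))
  rw [hcomm] at hmem
  simpa using sub_mem one_mem_commutatorSpan hmem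

theorem commutatorSpan_subset_center_of_forall_pow_mem (q : ℕ) [ExpChar D q]
    (h : ∀ t ∈ commutatorSpan D, ∃ r : ℕ, t ^ q ^ r ∈ Subring.center D) :
    (commutatorSpan D : Set D) ⊆ Subring.center D := by
  intro a haT
  by_contra ha
  have ha0 : a ≠ 0 := ne_zero_of_notMem_center ha
  obtain ⟨m, hm⟩ := h a haT
  obtain ⟨g, hg, hga⟩ := exists_mul_eq_mul_sub_one_of_pow_mem_center q ha hm
  obtain ⟨r, hr⟩ := h g⁻¹ (inv_mem_commutatorSpan ha0 one_ne_zero hg (by simp) hga)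
  have hr : g ^ q ^ r ∈ Subring.center D := by
    have hinv := Set.inv_mem_center hr
    rwa [inv_pow, inv_inv] at hinv
  have hconj : a * (g - 1) ^ q ^ r = g ^ q ^ r * a := SemiconjBy.pow_right hga.symm (q ^ r)
  rw [sub_pow_expChar_pow_of_commute q r (Commute.one_right g), one_pow, mul_sub, mul_one,
    Subring.mem_center_iff.1 hr a] at hconj
  exact ha0 (by simpa using hconj)

theorem commutatorSpan_subset_center_of_forall_isOfFinOrder (p : ℕ) [NeZero p] [CharP D p]
    (h : ∀ t ∈ commutatorSpan D, t ≠ 0 → IsOfFinOrder t) :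
    (commutatorSpan D : Set D) ⊆ Subring.center D := by
  intro a haT
  by_contra ha
  have ha0 : a ≠ 0 := ne_zero_of_notMem_center ha
  let K := Subring.closure {a}
  have haK : a ∈ K := Subring.subset_closure (Set.mem_singleton a)
  have : Finite K := finite_closure_singleton_of_isOfFinOrder p (h a haT ha0)
  obtain ⟨k, hkK, hka, y, hy, hyk⟩ := exists_mul_eq_mul_of_mem_finite_subring haK ha
  obtain ⟨g, hg, hga, hgk⟩ := exists_mul_eq_mul_sub_one_of_mul_eq_mul ha0 hy hka
    (commute_of_mem_of_finite hkK haK) hyk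
  have hg_fin : IsOfFinOrder g := by
    have := h g⁻¹ (inv_mem_commutatorSpan ha0 hy hg hyk hga) (inv_ne_zero hg)
    simpa [isOfFinOrder_iff_pow_eq_one] using this
  have hgaK : g * a ∈ Submodule.span K {g, 1} := by
    rw [hga, mul_sub, mul_one]
    exact Submodule.mem_span_pair.2
      ⟨⟨k, hkK⟩, -⟨k, hkK⟩, by simp [Subring.smul_def, sub_eq_add_neg]⟩
  obtain ⟨S, _, hKS, hgS⟩ := exists_finite_subring_of_mul_mem_span (K := K) hg_fin fun b hb =>
    mul_mem_span_of_mem_closure (s := {a}) (by simpa using hgaK) hb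
  exact hgk (commute_of_mem_of_finite hgS (hKS hkK))

lemma sub_mul_eq_one_sub {u v x y : D} (hy : y ≠ 0) (hv : v ∈ Subring.center D)
    (hu : u ∈ Subring.center D) (hux : u * (y * x) = x * y)
    (hvx : v * (y * (x + 1)) = (x + 1) * y) : (v - u) * x = 1 - v := by
  apply mul_left_cancel₀ hy
  calc y * ((v - u) * x) = (v - u) * (y * x) := by
        rw [← mul_assoc, Subring.mem_center_iff.1 (sub_mem hv hu), mul_assoc]
    _ = v * (y * (x + 1)) - v * y - u * (y * x) := by noncomm_ring
    _ = y - v * y := by rw [hvx, hux]; noncomm_ring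
    _ = y * (1 - v) := by rw [mul_sub, mul_one, Subring.mem_center_iff.1 hv]

theorem mem_center_of_commutatorSpan_subset_center
    (h : (commutatorSpan D : Set D) ⊆ Subring.center D) (x : D) : x ∈ Subring.center D := by
  by_contra hx
  have hx0 : x ≠ 0 := ne_zero_of_notMem_center hx
  have hx1 : x + 1 ≠ 0 := fun h1 => hx (eq_neg_of_add_eq_zero_left h1 ▸ neg_mem (one_mem _))
  obtain ⟨y, hy⟩ := exists_mul_ne_mul_of_notMem_center hx
  have hy0 : y ≠ 0 := by
    rintro rfl
    simp at hy
  let u := x * y * x⁻¹ * y⁻¹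
  let v := (x + 1) * y * (x + 1)⁻¹ * y⁻¹
  have hu : u ∈ Subring.center D := h (commutator_mem_commutatorSpan hx0 hy0)
  have hv : v ∈ Subring.center D := h (commutator_mem_commutatorSpan hx1 hy0)
  have hux : u * (y * x) = x * y := by simp [u, ← mul_assoc, hx0, hy0]
  have hvx : v * (y * (x + 1)) = (x + 1) * y := by
    rw [← mul_assoc, inv_mul_cancel_right₀ hy0, inv_mul_cancel_right₀ hx1]
  have hvu_mul : (v - u) * x = 1 - v := sub_mul_eq_one_sub hy0 hv hu hux hvx
  have hvu : v - u ≠ 0 := fun hvu => by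
    have hv1 : 1 - v = 0 := by rw [← hvu_mul, hvu, zero_mul]
    have hu1 : u = 1 := (sub_eq_zero.1 hvu).symm.trans (sub_eq_zero.1 hv1).symm
    exact hy (by rwa [hu1, one_mul] at hux)
  apply hx
  rw [← inv_mul_cancel_left₀ hvu x, hvu_mul]
  exact mul_mem (Set.inv_mem_center (sub_mem hv hu)) (sub_mem (one_mem _) hv)

theorem exists_charP_and_forall_isOfFinOrder_of_pow_notMem_center (q : ℕ) [ExpChar D q]
    (hrad : ∀ t ∈ commutatorSpan D, ∃ n : ℕ, 0 < n ∧ t ^ n ∈ Subring.center D) {t : D}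
    (ht : t ∈ commutatorSpan D) (hsep : ∀ r : ℕ, t ^ q ^ r ∉ Subring.center D) :
    ∃ p : ℕ, p.Prime ∧ CharP D p ∧ ∀ s ∈ commutatorSpan D, s ≠ 0 → IsOfFinOrder s := by
  let F := Subring.center D
  have : ExpChar F q := ExpChar.expChar_center_iff.2 inferInstance
  have range_eq : (algebraMap F D).range = F := Subring.range_subtype F
  have hrad_add (a : F) : ∃ n : ℕ, 0 < n ∧ (t + algebraMap F D a) ^ n ∈ (algebraMap F D).range := by
    rw [range_eq]
    exact hrad _ (add_mem ht (algebraMap_mem_commutatorSpan a))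
  have hsep_range : ¬ ∃ r : ℕ, t ^ q ^ r ∈ (algebraMap F D).range := by
    rw [range_eq]
    exact not_exists.2 hsep
  obtain ⟨p, hp, _, htors⟩ :=
    (exists_pow_mem_range_or_forall_isOfFinOrder q hrad_add).resolve_left hsep_range
  refine ⟨p, hp, charP_of_injective_algebraMap (algebraMap F D).injective p, fun s hs hs0 => ?_⟩
  obtain ⟨n, hn, hsn⟩ := hrad s hs
  have hsn_fin : IsOfFinOrder (⟨s ^ n, hsn⟩ : F) :=
    htors _ fun h => pow_ne_zero n hs0 (congrArg Subtype.val h)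
  exact ((algebraMap F D).toMonoidHom.isOfFinOrder hsn_fin).of_pow hn.ne'

end DivisionRing

/-- If every element of `T(D)` is radical over the centre `F`, then `D = F`. -/
theorem stmt_15 (D : Type*) [DivisionRing D]
    (T : Submodule (Subring.center D) D)
    (hT : T = Submodule.span (Subring.center D)
      {z : D | ∃ x y : D, x ≠ 0 ∧ y ≠ 0 ∧ z = x * y * x⁻¹ * y⁻¹})
    (hrad : ∀ t ∈ T, ∃ n : ℕ, 0 < n ∧ t ^ n ∈ Subring.center D) :
    ∀ x : D, x ∈ Subring.center D := by
  obtain rfl : T = commutatorSpan D := hT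
  apply mem_center_of_commutatorSpan_subset_center
  obtain ⟨q, _⟩ := ExpChar.exists D
  by_cases hinsep : ∀ t ∈ commutatorSpan D, ∃ r : ℕ, t ^ q ^ r ∈ Subring.center D
  · exact commutatorSpan_subset_center_of_forall_pow_mem q hinsep
  · push Not at hinsep
    obtain ⟨t, ht, hsep⟩ := hinsep
    obtain ⟨p, hp, _, hfin⟩ :=
      exists_charP_and_forall_isOfFinOrder_of_pow_notMem_center q hrad ht hsep
    have : NeZero p := ⟨hp.ne_zero⟩
    exact commutatorSpan_subset_center_of_forall_isOfFinOrder p hfin
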